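/- arXiv:1905.04337 — 2 statements merged into one kernel-verified Lean document; each statement's English description precedes it below -/
import Mathlib

section
/- Let s_1, s'_1 ∈ S^x determine two trajectories coupled by the same demand sequence. If I'_t ≥ I_t for all t ∈ {1, 2, …, L+1}, then s'_{L+1} = s_{L+1}; consequently s'_t = s_t, y'_t = y_t, and C'_t = C_t for all t ≥ L+1. -/
open Finset

/-- One step of the base-stock Markov reward process: given state `s ∈ S^x`
(on-hand inventory `s 0` and pipeline `s 1, …, s L`) and demand `z`, the next
state is `(s 0 - min (s 0) z + s 1, s 2, …, s L, min (s 0) z)`. -/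
noncomputable def mrpStep (L : ℕ) (s : Fin (L + 1) → ℝ) (z : ℝ) : Fin (L + 1) → ℝ :=
  fun i =>
    if (i : ℕ) = 0 then s 0 - min (s 0) z + s 1
    else if h : (i : ℕ) = L then min (s 0) z
    else s ⟨(i : ℕ) + 1, by have := i.isLt; omega⟩

/-- The trajectory of the Markov reward process driven by the (0-indexed) demand
sequence `d`, started at `s₁`; `mrpTraj L d s₁ t` is the state at (1-indexed) time `t+1`. -/
noncomputable def mrpTraj (L : ℕ) (d : ℕ → ℝ) (s₁ : Fin (L + 1) → ℝ) : ℕ → Fin (L + 1) → ℝ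
  | 0 => s₁
  | t + 1 => mrpStep L (mrpTraj L d s₁ t) (d t)

/-- Membership in the state space `S^x`: nonnegative entries summing to `x`. -/
def memS (L : ℕ) (x : ℝ) (s : Fin (L + 1) → ℝ) : Prop :=
  (∀ i, 0 ≤ s i) ∧ ∑ i, s i = x

/-- On-hand inventory `I` at (0-indexed) time `t`. -/
noncomputable def onHand (L : ℕ) (d : ℕ → ℝ) (s₁ : Fin (L + 1) → ℝ) (t : ℕ) : ℝ :=
  mrpTraj L d s₁ t 0

/-- Sales `y = min(I, d)` at (0-indexed) time `t`. -/
noncomputable def sales (L : ℕ) (d : ℕ → ℝ) (s₁ : Fin (L + 1) → ℝ) (t : ℕ) : ℝ :=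
  min (onHand L d s₁ t) (d t)

/-- Pseudo-cost `C = h (I - y) - p y` at (0-indexed) time `t`. -/
noncomputable def pcost (L : ℕ) (h p : ℝ) (d : ℕ → ℝ) (s₁ : Fin (L + 1) → ℝ) (t : ℕ) : ℝ :=
  h * (onHand L d s₁ t - sales L d s₁ t) - p * sales L d s₁ t

/-- The dominance relation: `succeq L s' s` means `s' ⪰ s`, i.e. with
`δ i = s' i - s i`, there is `k ∈ {0, …, L-1}` with `δ i ≥ 0` for `i ≤ k`
and `δ i ≤ 0` for `k < i`. -/
def succeq (L : ℕ) (s' s : Fin (L + 1) → ℝ) : Prop :=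
  ∃ k : ℕ, k < L ∧ (∀ i : Fin (L + 1), (i : ℕ) ≤ k → s i ≤ s' i) ∧
    ∀ i : Fin (L + 1), k < (i : ℕ) → s' i ≤ s i

/-!
Everything in the pipeline arrives within `L` periods, so at time `T + L` the pipeline consists
exactly of the sales made at times `T, …, T + L - 1`. Sales are monotone in the on-hand inventory,
so dominance of inventory during `T, …, T + L` makes the state at time `T + L` dominate in every
coordinate. The dynamics conserve the total number of units, and two coordinatewise comparable
vectors with the same total are equal. From then on the common demands keep the trajectories equal.
-/

section Step

variable {L : ℕ} (s : Fin (L + 1) → ℝ) (z : ℝ)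

lemma mrpStep_zero : mrpStep L s z 0 = s 0 - min (s 0) z + s 1 := by
  simp [mrpStep]

lemma mrpStep_last (hL : 1 ≤ L) : mrpStep L s z (Fin.last L) = min (s 0) z := by
  simp [mrpStep, Nat.one_le_iff_ne_zero.1 hL]

lemma mrpStep_castSucc {i : Fin L} (hi : (i : ℕ) ≠ 0) :
    mrpStep L s z i.castSucc = s i.succ := by
  simp [mrpStep, hi, i.isLt.ne, Fin.succ]

lemma sum_mrpStep (hL : 1 ≤ L) : ∑ i, mrpStep L s z i = ∑ i, s i := by
  obtain ⟨m, rfl⟩ := Nat.exists_eq_add_of_le' hL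
  have shifted (i : Fin m) : mrpStep (m + 1) s z i.succ.castSucc = s i.succ.succ :=
    mrpStep_castSucc s z (by simp)
  calc ∑ i, mrpStep (m + 1) s z i
      = (s 0 - min (s 0) z + s 1) + ∑ i : Fin m, s i.succ.succ + min (s 0) z := by
        simp only [Fin.sum_univ_castSucc, Fin.sum_univ_succ (n := m), Fin.castSucc_zero,
          mrpStep_zero, shifted, mrpStep_last s z hL]
    _ = s 0 + (s 1 + ∑ i : Fin m, s i.succ.succ) := by ring
    _ = ∑ i, s i := by simp only [Fin.sum_univ_succ, Fin.succ_zero_eq_one]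

end Step

section Trajectory

variable {L : ℕ} (d : ℕ → ℝ) (s : Fin (L + 1) → ℝ)

lemma sum_mrpTraj (hL : 1 ≤ L) (t : ℕ) : ∑ i, mrpTraj L d s t i = ∑ i, s i := by
  induction t with
  | zero => rfl
  | succ t ih => rw [mrpTraj, sum_mrpStep _ _ hL, ih]

lemma mrpTraj_succ_last (hL : 1 ≤ L) (t : ℕ) :
    mrpTraj L d s (t + 1) (Fin.last L) = sales L d s t :=
  mrpStep_last _ _ hL

lemma mrpTraj_add_apply_succ (t n : ℕ) {i j : Fin L} (hij : (i : ℕ) + n = j) :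
    mrpTraj L d s (t + n) i.succ = mrpTraj L d s t j.succ := by
  induction n generalizing i with
  | zero => rw [Fin.ext hij, Nat.add_zero]
  | succ n ih =>
    let next : Fin L := ⟨i + 1, by omega⟩
    calc mrpTraj L d s (t + (n + 1)) i.succ
        = mrpTraj L d s (t + n) next.succ :=
          mrpStep_castSucc (i := next) _ _ (Nat.succ_ne_zero _)
      _ = mrpTraj L d s t j.succ := ih (by simp only [next]; omega)

lemma mrpTraj_add_leadTime_succ (t : ℕ) (i : Fin L) :
    mrpTraj L d s (t + L) i.succ = sales L d s (t + i) := by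
  obtain ⟨m, rfl⟩ := Nat.exists_eq_add_of_le' (Fin.pos i)
  have elapsed : t + (m + 1) = t + i + 1 + (m - i) := by omega
  rw [elapsed, mrpTraj_add_apply_succ d s _ _ (j := Fin.last m) (by rw [Fin.val_last]; omega),
    Fin.succ_last, mrpTraj_succ_last d s (Fin.pos i)]

end Trajectory

section Coupling

variable {L : ℕ} {d d' : ℕ → ℝ} {s s' : Fin (L + 1) → ℝ} {t t₀ : ℕ}

lemma sales_le_sales (hI : onHand L d s t ≤ onHand L d s' t) :
    sales L d s t ≤ sales L d s' t :=
  min_le_min_right _ hI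

lemma mrpTraj_add_leadTime_le (hI : onHand L d s (t + L) ≤ onHand L d' s' (t + L))
    (hy : ∀ k < L, sales L d s (t + k) ≤ sales L d' s' (t + k)) :
    mrpTraj L d s (t + L) ≤ mrpTraj L d' s' (t + L) := by
  intro i
  cases i using Fin.cases with
  | zero => exact hI
  | succ i =>
    rw [mrpTraj_add_leadTime_succ, mrpTraj_add_leadTime_succ]
    exact hy i i.isLt

lemma mrpTraj_eq_of_le_of_sum_eq (hL : 1 ≤ L) (hsum : ∑ i, s i = ∑ i, s' i)
    (hle : mrpTraj L d s t ≤ mrpTraj L d' s' t) : mrpTraj L d s t = mrpTraj L d' s' t := by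
  have total_eq : ∑ i, mrpTraj L d s t i = ∑ i, mrpTraj L d' s' t i := by
    rw [sum_mrpTraj d s hL, sum_mrpTraj d' s' hL, hsum]
  exact hle.eq_of_not_lt fun hlt => (Fintype.sum_strictMono hlt).ne total_eq

lemma mrpTraj_eq_of_eq_of_le (heq : mrpTraj L d s t₀ = mrpTraj L d s' t₀) (ht : t₀ ≤ t) :
    mrpTraj L d s t = mrpTraj L d s' t := by
  induction t, ht using Nat.le_induction with
  | base => exact heq
  | succ t _ ih => rw [mrpTraj, mrpTraj, ih]

lemma sales_eq_of_mrpTraj_eq (heq : mrpTraj L d s t = mrpTraj L d s' t) :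
    sales L d s t = sales L d s' t := by
  simp only [sales, onHand, heq]

lemma pcost_eq_of_mrpTraj_eq (h p : ℝ) (heq : mrpTraj L d s t = mrpTraj L d s' t) :
    pcost L h p d s t = pcost L h p d s' t := by
  simp only [pcost, sales, onHand, heq]

end Coupling

theorem coupling_coalescence_general {L : ℕ} (hL : 1 ≤ L) (h p : ℝ) (d : ℕ → ℝ)
    {s s' : Fin (L + 1) → ℝ} (hsum : ∑ i, s i = ∑ i, s' i) (T : ℕ)
    (hinv : ∀ k ≤ L, onHand L d s (T + k) ≤ onHand L d s' (T + k)) {t : ℕ} (ht : T + L ≤ t) :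
    mrpTraj L d s' t = mrpTraj L d s t ∧ sales L d s' t = sales L d s t ∧
      pcost L h p d s' t = pcost L h p d s t := by
  have dominated : mrpTraj L d s (T + L) ≤ mrpTraj L d s' (T + L) :=
    mrpTraj_add_leadTime_le (hinv L le_rfl) fun k hk => sales_le_sales (hinv k hk.le)
  have coalesced : mrpTraj L d s (T + L) = mrpTraj L d s' (T + L) :=
    mrpTraj_eq_of_le_of_sum_eq hL hsum dominated
  have heq : mrpTraj L d s' t = mrpTraj L d s t := mrpTraj_eq_of_eq_of_le coalesced.symm ht
  exact ⟨heq, sales_eq_of_mrpTraj_eq heq, pcost_eq_of_mrpTraj_eq h p heq⟩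

/-- if `I'_t ≥ I_t` for the first `L+1` steps (0-indexed times
`0, …, L`), then the coupled trajectories coincide from (1-indexed) time `L+1`
on; consequently states, sales and pseudo-costs agree from then on. -/
theorem coupling_coalescence (L : ℕ) (hL : 1 ≤ L) (x : ℝ) (hx : 0 ≤ x)
    (h p : ℝ) (h0 : 0 ≤ h) (p0 : 0 ≤ p)
    (d : ℕ → ℝ) (hd : ∀ t, 0 ≤ d t)
    (s₁ s₁' : Fin (L + 1) → ℝ) (hs₁ : memS L x s₁) (hs₁' : memS L x s₁')
    (hinv : ∀ t, t ≤ L → onHand L d s₁ t ≤ onHand L d s₁' t) :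
    mrpTraj L d s₁' L = mrpTraj L d s₁ L ∧
    ∀ t, L ≤ t → mrpTraj L d s₁' t = mrpTraj L d s₁ t ∧
      sales L d s₁' t = sales L d s₁ t ∧
      pcost L h p d s₁' t = pcost L h p d s₁ t := by
  have coalesced (t : ℕ) (ht : L ≤ t) := coupling_coalescence_general hL h p d
    (hs₁.2.trans hs₁'.2.symm) 0 (by simpa only [Nat.zero_add] using hinv)
    (t := t) (by rwa [Nat.zero_add])
  exact ⟨(coalesced L le_rfl).1, coalesced⟩
end

section
/- Let f : ℝ → ℝ be convex on [l, r] with w := r − l > 0, and set x_l := l + w/4, x_c := l + w/2, x_r := l + 3w/4. Let x* ∈ [l, r] satisfy f(x*) ≤ f(x) for all x ∈ [l, r]. Suppose ε ≥ 0 and the three values f(x_l), f(x_c), f(x_r) all lie within an interval of length at most 3ε (i.e., the maximum of the three minus the minimum of the three is at most 3ε). Then f(x) ≤ f(x*) + 12ε for each x ∈ {x_l, x_c, x_r}. -/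
/-!
Every `x ∈ [l, r]` has test points `p` and `z` such that `p` lies between `x` and `z`, at least as
close to `x` as to `z`. Write `p = a x + b z` with `a + b = 1` and `b ≤ a`. If the values of `f` at
the test points differ by at most `δ`, convexity gives `a f(p) ≤ a f(x) + b (f(z) - f(p))`, hence
`f(p) ≤ f(x) + δ`. Every test value is within `δ` of `f(p)`, so it is at most `f(x) + 2 δ`; for
`δ = 3 ε` this is `f(x) + 6 ε`.
-/

section Convex

variable {𝕜 E β : Type*} [Field 𝕜] [LinearOrder 𝕜] [IsStrictOrderedRing 𝕜]
  [AddCommGroup E] [Module 𝕜 E]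
  [AddCommGroup β] [PartialOrder β] [IsOrderedAddMonoid β] [Module 𝕜 β] [PosSMulMono 𝕜 β]
  {s : Set E} {f : E → β} {x p z : E} {δ : β}

lemma le_add_of_convex_combination {a b : 𝕜} (hf : ConvexOn 𝕜 s f) (hx : x ∈ s) (hz : z ∈ s)
    (hb : 0 ≤ b) (hab : a + b = 1) (hba : b ≤ a) (hδ : 0 ≤ δ)
    (hfz : f z - f (a • x + b • z) ≤ δ) : f (a • x + b • z) ≤ f x + δ := by
  set p := a • x + b • z
  have ha : 0 < a := by linarith
  have hconv : f p ≤ a • f x + b • f z := hf.2 hx hz ha.le hb hab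
  have hδ_smul : b • δ ≤ a • δ := by
    simpa [sub_smul] using smul_nonneg (sub_nonneg.2 hba) hδ
  refine le_of_smul_le_smul_left ?_ ha
  calc a • f p = f p - b • f p := by rw [eq_sub_iff_add_eq, ← add_smul, hab, one_smul]
    _ ≤ a • f x + b • f z - b • f p := by gcongr
    _ = a • f x + b • (f z - f p) := by rw [smul_sub, add_sub_assoc]
    _ ≤ a • f x + b • δ := by gcongr
    _ ≤ a • f x + a • δ := by gcongr
    _ = a • (f x + δ) := (smul_add a (f x) δ).symm

lemma le_add_of_mem_segment_midpoint (hf : ConvexOn 𝕜 s f) (hx : x ∈ s) (hz : z ∈ s)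
    (hp : p ∈ segment 𝕜 x (midpoint 𝕜 x z)) (hδ : 0 ≤ δ) (hfz : f z - f p ≤ δ) :
    f p ≤ f x + δ := by
  obtain ⟨a, b, ha, hb, hab, rfl⟩ := hp
  have hcomb : a • x + b • midpoint 𝕜 x z = (a + b / 2) • x + (b / 2) • z := by
    rw [midpoint_eq_smul_add, invOf_eq_inv]
    module
  rw [hcomb] at hfz ⊢
  exact le_add_of_convex_combination hf hx hz (by linarith) (by linarith) (by linarith) hδ hfz

end Convex

section Quartile

variable {𝕜 β : Type*} [Field 𝕜]

/-- The test points `x_l`, `x_c`, `x_r` of the bisection algorithm, at one, two and three quarters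
of the working interval `[l, r]`. -/
def quartilePoints (l r : 𝕜) : Set 𝕜 :=
  {l + (r - l) / 4, l + (r - l) / 2, l + 3 * (r - l) / 4}

lemma sub_le_max_sub_min_of_mem_quartilePoints [AddCommGroup β] [LinearOrder β]
    [IsOrderedAddMonoid β] (f : 𝕜 → β) {l r a b : 𝕜} (ha : a ∈ quartilePoints l r)
    (hb : b ∈ quartilePoints l r) :
    f a - f b ≤
      max (max (f (l + (r - l) / 4)) (f (l + (r - l) / 2))) (f (l + 3 * (r - l) / 4)) -
        min (min (f (l + (r - l) / 4)) (f (l + (r - l) / 2))) (f (l + 3 * (r - l) / 4)) := by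
  apply sub_le_sub
  · rcases ha with rfl | rfl | rfl <;> simp
  · rcases hb with rfl | rfl | rfl <;> simp

variable [LinearOrder 𝕜] [IsStrictOrderedRing 𝕜] {l r x : 𝕜}

lemma quartilePoints_subset_Icc (hlr : l ≤ r) : quartilePoints l r ⊆ Set.Icc l r := by
  rintro _ (rfl | rfl | rfl) <;> constructor <;> linarith

lemma exists_quartilePoints_mem_segment_midpoint (hx : x ∈ Set.Icc l r) :
    ∃ p ∈ quartilePoints l r, ∃ z ∈ quartilePoints l r, p ∈ segment 𝕜 x (midpoint 𝕜 x z) := by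
  obtain ⟨hlx, hxr⟩ := hx
  have mem_of_le {p z : 𝕜} (hxp : x ≤ p) (hpz : 2 * p ≤ x + z) :
      p ∈ segment 𝕜 x (midpoint 𝕜 x z) := by
    rw [segment_eq_uIcc, midpoint_eq_smul_add, invOf_eq_inv, smul_eq_mul]
    exact Set.mem_uIcc_of_le hxp (by linarith)
  have mem_of_ge {p z : 𝕜} (hpx : p ≤ x) (hzp : x + z ≤ 2 * p) :
      p ∈ segment 𝕜 x (midpoint 𝕜 x z) := by
    rw [segment_eq_uIcc, midpoint_eq_smul_add, invOf_eq_inv, smul_eq_mul]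
    exact Set.mem_uIcc_of_ge (by linarith) hpx
  have hleft : l + (r - l) / 4 ∈ quartilePoints l r := .inl rfl
  have hcenter : l + (r - l) / 2 ∈ quartilePoints l r := .inr (.inl rfl)
  have hright : l + 3 * (r - l) / 4 ∈ quartilePoints l r := .inr (.inr rfl)
  rcases le_total x (l + (r - l) / 2) with hx_center | h_center_x
  · rcases le_total x (l + (r - l) / 4) with hx_left | h_left_x
    · exact ⟨_, hleft, _, hcenter, mem_of_le hx_left (by linarith)⟩
    · exact ⟨_, hcenter, _, hright, mem_of_le hx_center (by linarith)⟩
  · rcases le_total x (l + 3 * (r - l) / 4) with hx_right | h_right_x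
    · exact ⟨_, hcenter, _, hleft, mem_of_ge h_center_x (by linarith)⟩
    · exact ⟨_, hright, _, hcenter, mem_of_ge h_right_x (by linarith)⟩

theorem convex_quartile_bound_general [AddCommGroup β] [PartialOrder β] [IsOrderedAddMonoid β]
    [Module 𝕜 β] [PosSMulMono 𝕜 β] {f : 𝕜 → β} {δ : β} (hf : ConvexOn 𝕜 (Set.Icc l r) f)
    (hx : x ∈ Set.Icc l r)
    (hspread : ∀ a ∈ quartilePoints l r, ∀ b ∈ quartilePoints l r, f a - f b ≤ δ) :
    ∀ a ∈ quartilePoints l r, f a ≤ f x + 2 • δ := by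
  intro a ha
  obtain ⟨p, hp, z, hz, hpxz⟩ := exists_quartilePoints_mem_segment_midpoint hx
  have hδ : 0 ≤ δ := by simpa using hspread a ha a ha
  have hz_mem : z ∈ Set.Icc l r := quartilePoints_subset_Icc (hx.1.trans hx.2) hz
  have hfp : f p ≤ f x + δ :=
    le_add_of_mem_segment_midpoint hf hx hz_mem hpxz hδ (hspread z hz p hp)
  calc f a ≤ δ + f p := sub_le_iff_le_add.1 (hspread a ha p hp)
    _ ≤ δ + (f x + δ) := by gcongr
    _ = f x + 2 • δ := by rw [two_nsmul, add_left_comm]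

end Quartile

/-- for `f` convex on `[l, r]` with `w = r - l > 0`, quartile test
points `x_l = l + w/4`, `x_c = l + w/2`, `x_r = l + 3w/4`, a minimizer `x*` of
`f` over `[l, r]`, and `ε ≥ 0`: if the three values `f x_l, f x_c, f x_r` lie
within an interval of length at most `3ε` (their max minus their min is `≤ 3ε`),
then each of them is within `12ε` of the minimum value `f x*`. -/
theorem convex_quartile_bound (f : ℝ → ℝ) (l r : ℝ) (hf : ConvexOn ℝ (Set.Icc l r) f)
    (hw : 0 < r - l) (xs : ℝ) (hxs : xs ∈ Set.Icc l r)
    (hmin : ∀ y ∈ Set.Icc l r, f xs ≤ f y) (ε : ℝ) (hε : 0 ≤ ε)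
    (hspread :
      max (max (f (l + (r - l) / 4)) (f (l + (r - l) / 2))) (f (l + 3 * (r - l) / 4)) -
        min (min (f (l + (r - l) / 4)) (f (l + (r - l) / 2))) (f (l + 3 * (r - l) / 4))
      ≤ 3 * ε) :
    f (l + (r - l) / 4) ≤ f xs + 12 * ε ∧
    f (l + (r - l) / 2) ≤ f xs + 12 * ε ∧
    f (l + 3 * (r - l) / 4) ≤ f xs + 12 * ε := by
  have hbound : ∀ a ∈ quartilePoints l r, f a ≤ f xs + 12 * ε := fun a ha ↦
    calc f a ≤ f xs + 2 • (3 * ε) := convex_quartile_bound_general hf hxs (fun _ hb _ hc ↦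
            (sub_le_max_sub_min_of_mem_quartilePoints f hb hc).trans hspread) a ha
      _ ≤ f xs + 12 * ε := by rw [two_nsmul]; linarith
  exact ⟨hbound _ (.inl rfl), hbound _ (.inr (.inl rfl)), hbound _ (.inr (.inr rfl))⟩
end
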